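/- arXiv:2205.04629 — 2 statements merged into one kernel-verified Lean document; each statement's English description precedes it below -/
import Mathlib

section
/- For every n ≥ 1 and every 1 ≤ m ≤ n, the set Γ_m := {k ∈ ℝⁿ : σ_j(k) > 0 for all 1 ≤ j ≤ m} is an open convex cone in ℝⁿ: it is open, closed under multiplication by positive scalars, and convex. -/
/-!
Openness is continuity of the `σ_j`, and the cone property is their homogeneity. Convexity
rests on the superadditivity of the quotient `σ_{m+1} / σ_m` on `Γ_m` (Marcus–Lopes), proved
by induction on `m` for all finite index sets simultaneously: if `x, y ∈ Γ_{m+1}`, then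
`x + y ∈ Γ_m` and `σ_{m+1}/σ_m` is superadditive, hence positive, at `x + y`, so
`x + y ∈ Γ_{m+1}`.

For the induction step write `σ_j^{(i)}` for the elementary symmetric function with the variable
`x_i` left out. From `(m+2) σ_{m+2} = ∑ x_i σ_{m+1}^{(i)}` and
`σ_{m+1} = σ_{m+1}^{(i)} + x_i σ_m^{(i)}` one gets
`(m+2) σ_{m+2}/σ_{m+1} = ∑ (x_i - x_i² / t_i)` with `t_i = x_i + σ_{m+1}^{(i)}/σ_m^{(i)}`.
By induction `t_i` is superadditive, and `(x, t) ↦ x²/t` is subadditive and antitone in `t > 0`.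

This uses that deleting a variable maps `Γ_{m+1}` into `Γ_m` (`gam_erase`), which follows from
Newton's inequality `σ_m σ_{m+2} ≤ σ_{m+1}²`. The latter comes from the real-rootedness of
`∏ (X + x_i)` and, by Rolle, of its derivatives, together with the inequality
`2 c₀ c₂ ≤ c₁²` for the low coefficients of a real-rooted polynomial.
-/

/-- The j-th elementary symmetric function of k = (k₁, …, k_n) ∈ ℝⁿ. -/
noncomputable def esymm (n j : ℕ) (k : Fin n → ℝ) : ℝ :=
  ∑ s ∈ Finset.powersetCard j (Finset.univ : Finset (Fin n)), ∏ i ∈ s, k i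

/-- The cone Γ_m := {k ∈ ℝⁿ : σ_j(k) > 0 for all 1 ≤ j ≤ m}. -/
def GammaCone (n m : ℕ) : Set (Fin n → ℝ) :=
  {k | ∀ j, 1 ≤ j → j ≤ m → 0 < esymm n j k}

/-! ### Newton's inequality for real-rooted polynomials -/

open Polynomial in
/-- Holds because multiplying by `X - r` changes `c₁² - 2 c₀ c₂` into
`c₀² + r² (c₁² - 2 c₀ c₂)`. -/
theorem two_mul_coeff_le_of_splits {p : ℝ[X]} (hp : p.Splits) :
    2 * (p.coeff 0 * p.coeff 2) ≤ p.coeff 1 ^ 2 := by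
  have key : ∀ M : Multiset ℝ, 2 * ((M.map fun a => X - C a).prod.coeff 0 *
      (M.map fun a => X - C a).prod.coeff 2) ≤ (M.map fun a => X - C a).prod.coeff 1 ^ 2 := by
    intro M
    induction M using Multiset.induction with
    | empty => simp [coeff_one]
    | cons r M ih =>
      rw [Multiset.map_cons, Multiset.prod_cons]
      set p := (M.map fun a => X - C a).prod
      have h0 : ((X - C r) * p).coeff 0 = - r * p.coeff 0 := by
        simp [sub_mul]
      have h1 : ((X - C r) * p).coeff 1 = p.coeff 0 - r * p.coeff 1 := by
        rw [sub_mul, coeff_sub, coeff_C_mul, coeff_X_mul p 0]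
      have h2 : ((X - C r) * p).coeff 2 = p.coeff 1 - r * p.coeff 2 := by
        rw [sub_mul, coeff_sub, coeff_C_mul, coeff_X_mul p 1]
      rw [h0, h1, h2]
      nlinarith [sq_nonneg (p.coeff 0), mul_nonneg (sq_nonneg r) (sub_nonneg.2 ih)]
  have h := key p.roots
  have hc : ∀ i, p.coeff i = p.leadingCoeff * (p.roots.map fun a => X - C a).prod.coeff i := by
    intro i
    rw [← coeff_C_mul, ← hp.eq_prod_roots]
  rw [hc 0, hc 1, hc 2]
  nlinarith [mul_nonneg (sq_nonneg p.leadingCoeff) (sub_nonneg.2 h)]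

open Polynomial in
/-- Rolle's theorem: the derivative of a real-rooted polynomial is real-rooted. -/
theorem splits_derivative_real {p : ℝ[X]} (hp : p.Splits) : (derivative p).Splits := by
  by_cases hd : p.natDegree = 0
  · rw [natDegree_eq_zero.1 hd |>.choose_spec.symm]
    simp
  rw [splits_iff_card_roots]
  have h1 := card_roots_le_derivative p
  have h2 := splits_iff_card_roots.1 hp
  have h3 := card_roots' (derivative p)
  have h4 := natDegree_derivative_lt hd
  omega

open Polynomial in
/-- Newton's inequality for consecutive coefficients of a real-rooted polynomial, obtained from
`two_mul_coeff_le_of_splits` applied to the `j`-th derivative. -/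
theorem coeff_newton {p : ℝ[X]} (hp : p.Splits) (j : ℕ) :
    (j + 2) * (p.coeff j * p.coeff (j + 2)) ≤ (j + 1) * p.coeff (j + 1) ^ 2 := by
  induction j generalizing p with
  | zero =>
    have := two_mul_coeff_le_of_splits hp
    simpa using this
  | succ j ih =>
    have h := ih (splits_derivative_real hp)
    simp only [coeff_derivative] at h
    push_cast at h ⊢
    have hj : (0 : ℝ) < (j + 1) * (j + 2) := by positivity
    have e1 : p.coeff (j + 1 + 2) = p.coeff (j + 2 + 1) := rfl
    rw [e1]
    refine le_of_mul_le_mul_left ?_ hj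
    linear_combination h

/-! ### Elementary symmetric functions over a finite index set -/

/-- The `j`-th elementary symmetric function of the variables `x i`, `i ∈ s`. -/
noncomputable def eSym {ι : Type*} (s : Finset ι) (j : ℕ) (x : ι → ℝ) : ℝ :=
  ∑ t ∈ Finset.powersetCard j s, ∏ i ∈ t, x i

section

variable {ι : Type*}

theorem eSym_zero (s : Finset ι) (x : ι → ℝ) : eSym s 0 x = 1 := by
  simp [eSym]

theorem eSym_one (s : Finset ι) (x : ι → ℝ) : eSym s 1 x = ∑ i ∈ s, x i := by
  simp [eSym, Finset.powersetCard_one]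

open Polynomial in
theorem eSym_newton (s : Finset ι) (m : ℕ) (x : ι → ℝ) :
    eSym s m x * eSym s (m + 2) x ≤ eSym s (m + 1) x ^ 2 := by
  by_cases hc : m + 2 ≤ s.card
  · obtain ⟨d, hd⟩ := Nat.exists_eq_add_of_le hc
    have hs : (∏ i ∈ s, (X + C (x i))).Splits :=
      Splits.prod fun i _ => Splits.X_add_C (x i)
    have h := coeff_newton hs d
    rw [Finset.prod_X_add_C_coeff s x (by omega), Finset.prod_X_add_C_coeff s x (by omega),
      Finset.prod_X_add_C_coeff s x (by omega), show s.card - d = m + 2 by omega,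
      show s.card - (d + 2) = m by omega, show s.card - (d + 1) = m + 1 by omega] at h
    change (d + 2 : ℝ) * (eSym s (m + 2) x * eSym s m x) ≤ (d + 1) * eSym s (m + 1) x ^ 2 at h
    have hd0 : (0 : ℝ) ≤ d := Nat.cast_nonneg d
    nlinarith [sq_nonneg (eSym s (m + 1) x)]
  · have h0 : eSym s (m + 2) x = 0 := by
      rw [eSym, Finset.powersetCard_eq_empty.2 (by omega), Finset.sum_empty]
    rw [h0, mul_zero]
    positivity

/-- Membership of `x` in the cone `Γ_m` of the variables indexed by `s`. The index `j = 0` is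
allowed, where the condition reads `0 < 1`. -/
def Gam (s : Finset ι) (m : ℕ) (x : ι → ℝ) : Prop := ∀ j ≤ m, 0 < eSym s j x

theorem Gam.mono {s : Finset ι} {m l : ℕ} {x : ι → ℝ} (h : Gam s m x) (hl : l ≤ m) :
    Gam s l x := fun j hj => h j (hj.trans hl)

theorem Gam.succ {s : Finset ι} {m : ℕ} {x : ι → ℝ} (h : Gam s m x)
    (h' : 0 < eSym s (m + 1) x) : Gam s (m + 1) x := by
  intro j hj
  rcases Nat.le_succ_iff.1 hj with hj | rfl
  · exact h j hj
  · exact h'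

variable [DecidableEq ι]

theorem eSym_insert {s : Finset ι} {a : ι} (ha : a ∉ s) (j : ℕ) (x : ι → ℝ) :
    eSym (insert a s) (j + 1) x = eSym s (j + 1) x + x a * eSym s j x := by
  have hmem : ∀ t ∈ Finset.powersetCard j s, a ∉ t := fun t ht h =>
    ha ((Finset.mem_powersetCard.1 ht).1 h)
  rw [eSym, Finset.powersetCard_succ_insert ha, Finset.sum_union, Finset.sum_image, eSym, eSym,
    Finset.mul_sum]
  · congr 1
    exact Finset.sum_congr rfl fun t ht => Finset.prod_insert (hmem t ht)
  · intro t ht u hu h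
    rw [← Finset.erase_insert (hmem t ht), ← Finset.erase_insert (hmem u hu)]
    exact congrArg (fun v => Finset.erase v a) h
  · rw [Finset.disjoint_left]
    intro t ht h
    obtain ⟨u, -, rfl⟩ := Finset.mem_image.1 h
    exact ha ((Finset.mem_powersetCard.1 ht).1 (Finset.mem_insert_self a u))

theorem eSym_erase {s : Finset ι} {i : ι} (hi : i ∈ s) (j : ℕ) (x : ι → ℝ) :
    eSym s (j + 1) x = eSym (s.erase i) (j + 1) x + x i * eSym (s.erase i) j x := by
  conv_lhs => rw [← Finset.insert_erase hi]
  exact eSym_insert (Finset.notMem_erase i s) j x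

/-- Euler's identity for the homogeneous function `eSym s (j + 1)`. -/
theorem eSym_euler (s : Finset ι) (j : ℕ) (x : ι → ℝ) :
    ((j : ℝ) + 1) * eSym s (j + 1) x = ∑ i ∈ s, x i * eSym (s.erase i) j x := by
  induction s using Finset.induction_on generalizing j with
  | empty =>
    have h0 : eSym (∅ : Finset ι) (j + 1) x = 0 := by
      rw [eSym, Finset.powersetCard_eq_empty.2 (by simp), Finset.sum_empty]
    rw [h0, mul_zero, Finset.sum_empty]
  | insert a s ha ih =>
    have hne : ∀ i ∈ s, (insert a s).erase i = insert a (s.erase i) := fun i hi =>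
      Finset.erase_insert_of_ne (by rintro rfl; exact ha hi)
    rw [Finset.sum_insert ha, Finset.erase_insert ha, eSym_insert ha]
    cases j with
    | zero => simp [eSym_zero, eSym_one, add_comm]
    | succ j =>
      have hsum : ∑ i ∈ s, x i * eSym ((insert a s).erase i) (j + 1) x
          = ∑ i ∈ s, x i * eSym (s.erase i) (j + 1) x
            + x a * ∑ i ∈ s, x i * eSym (s.erase i) j x := by
        rw [Finset.mul_sum, ← Finset.sum_add_distrib]
        refine Finset.sum_congr rfl fun i hi => ?_
        rw [hne i hi, eSym_insert (fun h => ha (Finset.mem_of_mem_erase h))]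
        ring
      rw [hsum, ← ih, ← ih]
      push_cast
      ring

/-! ### Superadditivity of the quotients -/

/-- Deleting a variable maps `Γ_{m+1}` into `Γ_m`. -/
theorem gam_erase {s : Finset ι} {m : ℕ} {x : ι → ℝ} (h : Gam s (m + 1) x) {i : ι}
    (hi : i ∈ s) : Gam (s.erase i) m x := by
  induction m with
  | zero =>
    intro j hj
    obtain rfl : j = 0 := by omega
    rw [eSym_zero]
    exact one_pos
  | succ m ih =>
    have h' := ih (h.mono (by omega))
    refine h'.succ ?_
    have p0 := h' m le_rfl
    have p1 := h (m + 1) (by omega)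
    have p2 := h (m + 2) (by omega)
    have e1 := eSym_erase hi m x
    have e2 := eSym_erase hi (m + 1) x
    have hN := eSym_newton (s.erase i) m x
    -- Newton turns the two recursions into `σ'_m σ_{m+2} ≤ σ'_{m+1} σ_{m+1}`.
    have key : eSym (s.erase i) m x * eSym s (m + 2) x
        ≤ eSym (s.erase i) (m + 1) x * eSym s (m + 1) x := by
      rw [e1, show m + 2 = m + 1 + 1 from rfl, e2]
      linear_combination hN
    exact pos_of_mul_pos_left (lt_of_lt_of_le (mul_pos p0 p2) key) p1.le

/-- Subadditivity of `(x, t) ↦ x² / t` combined with its monotonicity in `t`. -/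
theorem sq_div_subadd {a b t u v : ℝ} (ht : 0 < t) (hu : 0 < u) (hv : t + u ≤ v) :
    (a + b) ^ 2 / v ≤ a ^ 2 / t + b ^ 2 / u := by
  calc (a + b) ^ 2 / v ≤ (a + b) ^ 2 / (t + u) := by gcongr
    _ ≤ a ^ 2 / t + b ^ 2 / u := by
      rw [div_add_div _ _ ht.ne' hu.ne', div_le_div_iff₀ (by positivity) (by positivity)]
      nlinarith [mul_nonneg (mul_pos ht hu).le (sq_nonneg (a * u - b * t)),
        sq_nonneg (a * u - b * t)]

/-- The expression of `(m+2) σ_{m+2}/σ_{m+1}` through the quotients `σ_{m+1}/σ_m` in one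
variable fewer, on which the induction runs. -/
theorem eSym_quot_eq {s : Finset ι} {m : ℕ} {x : ι → ℝ} (h : Gam s (m + 1) x) :
    ((m : ℝ) + 2) * (eSym s (m + 2) x / eSym s (m + 1) x) =
      ∑ i ∈ s, (x i - x i ^ 2 / (x i + eSym (s.erase i) (m + 1) x / eSym (s.erase i) m x)) := by
  have e := eSym_euler s (m + 1) x
  push_cast at e
  have hp := h (m + 1) le_rfl
  rw [← mul_div_assoc, show (m : ℝ) + 2 = m + 1 + 1 by ring, e, Finset.sum_div]
  refine Finset.sum_congr rfl fun i hi => ?_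
  have hq := gam_erase h hi m le_rfl
  have er := eSym_erase hi m x
  have ht : x i + eSym (s.erase i) (m + 1) x / eSym (s.erase i) m x
      = eSym s (m + 1) x / eSym (s.erase i) m x := by
    rw [er]; field_simp; ring
  rw [ht]
  have er' : eSym (s.erase i) (m + 1) x = eSym s (m + 1) x - x i * eSym (s.erase i) m x := by
    linarith
  rw [er']
  field_simp

/-- `Γ_m` is closed under addition and `σ_{m+1} / σ_m` is superadditive on it. -/
theorem gam_add_and_quot (m : ℕ) : ∀ (s : Finset ι) (x y : ι → ℝ), Gam s m x → Gam s m y →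
    Gam s m (x + y) ∧ eSym s (m + 1) x / eSym s m x + eSym s (m + 1) y / eSym s m y
      ≤ eSym s (m + 1) (x + y) / eSym s m (x + y) := by
  induction m with
  | zero =>
    intro s x y _ _
    refine ⟨fun j hj => ?_, ?_⟩
    · obtain rfl : j = 0 := by omega
      rw [eSym_zero]
      exact one_pos
    · simp [eSym_zero, eSym_one, Finset.sum_add_distrib]
  | succ m ih =>
    intro s x y hx hy
    obtain ⟨hz0, hq⟩ := ih s x y (hx.mono (by omega)) (hy.mono (by omega))
    have hz : Gam s (m + 1) (x + y) := by
      refine hz0.succ ?_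
      have h1 := div_pos (hx (m + 1) le_rfl) (hx m (by omega))
      have h2 := div_pos (hy (m + 1) le_rfl) (hy m (by omega))
      exact (div_pos_iff_of_pos_right (hz0 m le_rfl)).1 (by linarith)
    refine ⟨hz, ?_⟩
    have hm : (0 : ℝ) < (m : ℝ) + 2 := by positivity
    refine le_of_mul_le_mul_left ?_ hm
    rw [mul_add, eSym_quot_eq hx, eSym_quot_eq hy, eSym_quot_eq hz, ← Finset.sum_add_distrib]
    refine Finset.sum_le_sum fun i hi => ?_
    have tpos : ∀ w : ι → ℝ, Gam s (m + 1) w →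
        0 < w i + eSym (s.erase i) (m + 1) w / eSym (s.erase i) m w := by
      intro w hw
      have hp := gam_erase hw hi m le_rfl
      have hp' := hw (m + 1) le_rfl
      rw [eSym_erase hi m w] at hp'
      have : w i + eSym (s.erase i) (m + 1) w / eSym (s.erase i) m w
          = (eSym (s.erase i) (m + 1) w + w i * eSym (s.erase i) m w) / eSym (s.erase i) m w := by
        field_simp; ring
      rw [this]
      exact div_pos hp' hp
    have hsup := (ih (s.erase i) x y (gam_erase hx hi) (gam_erase hy hi)).2
    have := sq_div_subadd (a := x i) (b := y i)
      (v := (x + y) i + eSym (s.erase i) (m + 1) (x + y) / eSym (s.erase i) m (x + y))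
      (tpos x hx) (tpos y hy) (by rw [Pi.add_apply]; linarith)
    simp only [Pi.add_apply] at this ⊢
    linarith

end

/-! ### The cones `Γ_m` in `ℝⁿ` -/

theorem mem_GammaCone_iff (n m : ℕ) (k : Fin n → ℝ) :
    k ∈ GammaCone n m ↔ Gam Finset.univ m k := by
  constructor
  · intro h j hj
    rcases Nat.eq_zero_or_pos j with rfl | hj0
    · rw [eSym_zero]
      exact one_pos
    · exact h j hj0 hj
  · intro h j _ hj
    exact h j hj

theorem esymm_smul (n j : ℕ) (c : ℝ) (k : Fin n → ℝ) :
    esymm n j (c • k) = c ^ j * esymm n j k := by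
  rw [esymm, esymm, Finset.mul_sum]
  refine Finset.sum_congr rfl fun t ht => ?_
  simp [Finset.prod_mul_distrib, (Finset.mem_powersetCard.1 ht).2]

/-- For every n ≥ 1 and 1 ≤ m ≤ n, the set Γ_m is an open convex
cone in ℝⁿ: it is open, closed under multiplication by positive scalars, and
convex. -/
theorem stmt_6 (n m : ℕ) (hn : 1 ≤ n) (hm : 1 ≤ m) (hmn : m ≤ n) :
    IsOpen (GammaCone n m) ∧
    (∀ c : ℝ, 0 < c → ∀ k ∈ GammaCone n m, c • k ∈ GammaCone n m) ∧
    Convex ℝ (GammaCone n m) := by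
  have hcone : ∀ c : ℝ, 0 < c → ∀ k ∈ GammaCone n m, c • k ∈ GammaCone n m := by
    intro c hc k hk j hj hjm
    rw [esymm_smul]
    exact mul_pos (pow_pos hc j) (hk j hj hjm)
  refine ⟨?_, hcone, ?_⟩
  · have hset : GammaCone n m = ⋂ j ∈ Set.Icc 1 m, {k | 0 < esymm n j k} := by
      ext k
      simp [GammaCone]
    rw [hset]
    refine (Set.finite_Icc 1 m).isOpen_biInter fun j _ => ?_
    have hcont : Continuous (esymm n j) := by
      unfold esymm
      fun_prop
    exact isOpen_lt continuous_const hcont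
  · refine convex_iff_forall_pos.2 fun x hx y hy a b ha hb _ => ?_
    have hx' := (mem_GammaCone_iff n m _).1 (hcone a ha x hx)
    have hy' := (mem_GammaCone_iff n m _).1 (hcone b hb y hy)
    exact (mem_GammaCone_iff n m _).2 (gam_add_and_quot m _ _ _ hx' hy').1
end

section
/- For every n ≥ 1 and every 1 ≤ m ≤ n, the elementary symmetric function σ_m is strictly increasing in each variable on Γ_m: for every k ∈ Γ_m and every index 1 ≤ i ≤ n, the partial derivative ∂σ_m/∂k_i evaluated at k is strictly positive. -/
open Polynomial in
/-- The quantity `q₁ ^ 2 - 2 q₀ q₂` is nonnegative on factors of degree at most one, and for a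
product it is `f₀ ^ 2 (g₁ ^ 2 - 2 g₀ g₂) + g₀ ^ 2 (f₁ ^ 2 - 2 f₀ f₂)`. -/
theorem Polynomial.Splits.two_mul_coeff_le {q : ℝ[X]} (hq : q.Splits) :
    2 * q.coeff 0 * q.coeff 2 ≤ q.coeff 1 ^ 2 := by
  induction hq using Submonoid.closure_induction with
  | mem x hx =>
    rcases hx with ⟨a, rfl⟩ | ⟨a, rfl⟩ <;> simp [coeff_X, coeff_C]
  | one => simp [coeff_one]
  | mul f g _ _ hf hg =>
    have h1 : (f * g).coeff 1 = f.coeff 0 * g.coeff 1 + f.coeff 1 * g.coeff 0 := by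
      simp [coeff_mul, Finset.Nat.antidiagonal_succ]
    have h2 : (f * g).coeff 2
        = f.coeff 0 * g.coeff 2 + f.coeff 1 * g.coeff 1 + f.coeff 2 * g.coeff 0 := by
      simp [coeff_mul, Finset.Nat.antidiagonal_succ, add_assoc]
    rw [h1, h2, mul_coeff_zero]
    nlinarith [mul_le_mul_of_nonneg_left hf (sq_nonneg (g.coeff 0)),
      mul_le_mul_of_nonneg_left hg (sq_nonneg (f.coeff 0))]

open Polynomial in
/-- A consequence of Rolle's theorem, through `Polynomial.card_roots_le_derivative`. -/
theorem Polynomial.Splits.derivative_real {q : ℝ[X]} (hq : q.Splits) :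
    (derivative q).Splits := by
  rw [splits_iff_card_roots]
  have h1 := card_roots_le_derivative q
  have h2 := natDegree_derivative_le q
  have h3 := card_roots' (derivative q)
  have h4 := hq.natDegree_eq_card_roots
  omega

open Polynomial in
theorem Polynomial.Splits.iterate_derivative_real {q : ℝ[X]} (hq : q.Splits) (j : ℕ) :
    (derivative^[j] q).Splits := by
  induction j with
  | zero => exact hq
  | succ j ih => rw [Function.iterate_succ_apply']; exact ih.derivative_real

theorem sum_powersetCard_insert {ι : Type*} [DecidableEq ι] (T : Finset ι) (a : ι) (ha : a ∉ T)
    (k : ι → ℝ) (j : ℕ) :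
    ∑ s ∈ (insert a T).powersetCard (j + 1), ∏ l ∈ s, k l
      = ∑ s ∈ T.powersetCard (j + 1), ∏ l ∈ s, k l
        + k a * ∑ s ∈ T.powersetCard j, ∏ l ∈ s, k l := by
  have hmem : ∀ s ∈ T.powersetCard j, a ∉ s := fun s hs h =>
    ha ((Finset.mem_powersetCard.1 hs).1 h)
  rw [Finset.powersetCard_succ_insert ha, Finset.sum_union, Finset.sum_image, Finset.mul_sum]
  · congr 1
    exact Finset.sum_congr rfl fun s hs => Finset.prod_insert (hmem s hs)
  · intro s hs t ht h
    rw [← Finset.erase_insert (hmem s hs), h, Finset.erase_insert (hmem t ht)]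
  · rw [Finset.disjoint_left]
    intro s hs hs'
    obtain ⟨t, -, rfl⟩ := Finset.mem_image.1 hs'
    exact ha ((Finset.mem_powersetCard.1 hs).1 (Finset.mem_insert_self a t))

open Polynomial in
theorem coeff_prod_one_add {ι : Type*} [DecidableEq ι] (T : Finset ι) (k : ι → ℝ) (j : ℕ) :
    (∏ l ∈ T, (1 + C (k l) * X)).coeff j = ∑ s ∈ T.powersetCard j, ∏ l ∈ s, k l := by
  induction T using Finset.induction_on generalizing j with
  | empty =>
    cases j with
    | zero => simp
    | succ j =>
      rw [Finset.powersetCard_eq_empty.2 (by simp)]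
      simp [coeff_one]
  | insert a T ha ih =>
    rw [Finset.prod_insert ha, add_mul, one_mul, mul_assoc, coeff_add, coeff_C_mul]
    cases j with
    | zero => simp [ih]
    | succ j => rw [coeff_X_mul, ih, ih, sum_powersetCard_insert T a ha]

open Polynomial in
/-- Newton's inequality for real numbers of arbitrary sign, without the sharp constant. -/
theorem sum_powersetCard_newton {ι : Type*} [DecidableEq ι] (T : Finset ι) (k : ι → ℝ) (j : ℕ) :
    (∑ s ∈ T.powersetCard j, ∏ l ∈ s, k l) * (∑ s ∈ T.powersetCard (j + 2), ∏ l ∈ s, k l)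
      ≤ (∑ s ∈ T.powersetCard (j + 1), ∏ l ∈ s, k l) ^ 2 := by
  simp only [← coeff_prod_one_add]
  set P : ℝ[X] := ∏ l ∈ T, (1 + C (k l) * X) with hP
  have hs : P.Splits := by
    refine Splits.prod fun l _ => Splits.of_natDegree_le_one ?_
    compute_degree
  have h := (hs.iterate_derivative_real j).two_mul_coeff_le
  -- The coefficients of the derivative are `j!`, `(j+1)!` and `(j+2)!/2` times those of `P`.
  have d0 : ((0 + j).descFactorial j : ℝ) = j.factorial := by
    simp [Nat.descFactorial_self]
  have d1 : ((1 + j).descFactorial j : ℝ) = (j + 1) * j.factorial := by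
    have := Nat.factorial_mul_descFactorial (show j ≤ 1 + j by omega)
    rw [Nat.add_sub_cancel, Nat.factorial_one, one_mul, add_comm 1 j, Nat.factorial_succ] at this
    rw [add_comm 1 j, this]; push_cast; ring
  have d2 : 2 * ((2 + j).descFactorial j : ℝ) = (j + 2) * (j + 1) * j.factorial := by
    have := Nat.factorial_mul_descFactorial (show j ≤ 2 + j by omega)
    rw [Nat.add_sub_cancel, Nat.factorial_two, add_comm 2 j, Nat.factorial_succ,
      Nat.factorial_succ] at this
    rw [add_comm 2 j]
    have h' := congrArg (Nat.cast (R := ℝ)) this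
    push_cast at h'
    rw [h']; ring
  simp only [coeff_iterate_derivative, nsmul_eq_mul, d0, d1] at h
  rw [zero_add, add_comm 1 j, add_comm 2 j] at h
  rw [add_comm 2 j] at d2
  have hf : (0 : ℝ) < j.factorial := by exact_mod_cast j.factorial_pos
  have hj : (0 : ℝ) ≤ j := j.cast_nonneg
  have h' : ((j.factorial : ℝ) ^ 2 * (j + 1)) * ((j + 2) * (P.coeff j * P.coeff (j + 2)))
      ≤ ((j.factorial : ℝ) ^ 2 * (j + 1)) * ((j + 1) * P.coeff (j + 1) ^ 2) := by
    calc _ = (j.factorial : ℝ) * P.coeff j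
            * (((j + 2) * (j + 1) * j.factorial) * P.coeff (j + 2)) := by ring
      _ ≤ ((j + 1) * j.factorial * P.coeff (j + 1)) ^ 2 := by
          rw [← d2]; linarith
      _ = _ := by ring
  have h'' := le_of_mul_le_mul_left h' (by positivity)
  by_contra! hlt
  nlinarith [sq_nonneg (P.coeff (j + 1)),
    mul_lt_mul_of_pos_left hlt (show (0:ℝ) < j + 2 by linarith)]

theorem esymm_succ (n j : ℕ) (k : Fin n → ℝ) (i : Fin n) :
    esymm n (j + 1) k
      = ∑ s ∈ (Finset.univ.erase i).powersetCard (j + 1), ∏ l ∈ s, k l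
        + k i * ∑ s ∈ (Finset.univ.erase i).powersetCard j, ∏ l ∈ s, k l := by
  rw [← sum_powersetCard_insert _ i (Finset.notMem_erase i _),
    Finset.insert_erase (Finset.mem_univ i), esymm]

theorem sum_powersetCard_erase_pos (n m : ℕ) (k : Fin n → ℝ) (hk : k ∈ GammaCone n m) (i : Fin n)
    (j : ℕ) (hj : j < m) :
    0 < ∑ s ∈ (Finset.univ.erase i).powersetCard j, ∏ l ∈ s, k l := by
  induction j with
  | zero => simp
  | succ j ih =>
    have h0 := ih (by omega)
    have h1 := hk (j + 1) (by omega) (by omega)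
    have h2 := hk (j + 2) (by omega) (by omega)
    rw [esymm_succ n _ k i] at h1 h2
    have hN := sum_powersetCard_newton (Finset.univ.erase i) k j
    by_contra! hle
    generalize ∑ s ∈ (Finset.univ.erase i).powersetCard j, ∏ l ∈ s, k l = a at *
    generalize ∑ s ∈ (Finset.univ.erase i).powersetCard (j + 1), ∏ l ∈ s, k l = b at *
    generalize ∑ s ∈ (Finset.univ.erase i).powersetCard (j + 2), ∏ l ∈ s, k l = c at *
    have e1 : 0 < a * (c + k i * b) := mul_pos h0 h2
    have e2 : 0 ≤ -b * (b + k i * a) := mul_nonneg (by linarith) h1.le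
    nlinarith

theorem fderiv_esymm_succ (n j : ℕ) (k : Fin n → ℝ) (i : Fin n) :
    fderiv ℝ (esymm n (j + 1)) k (Pi.single i 1)
      = ∑ s ∈ (Finset.univ.erase i).powersetCard j, ∏ l ∈ s, k l := by
  have hd : DifferentiableAt ℝ (esymm n (j + 1)) k := by
    unfold esymm
    fun_prop
  rw [← hd.lineDeriv_eq_fderiv]
  -- Sums over subsets of the remaining indices are constant along the line through `k` in
  -- direction `i`, so `esymm n (j + 1)` is affine there.
  have hc : ∀ (t : ℝ) (p : ℕ),
      ∑ s ∈ (Finset.univ.erase i).powersetCard p, ∏ l ∈ s, (k + t • (Pi.single i 1 : Fin n → ℝ)) l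
        = ∑ s ∈ (Finset.univ.erase i).powersetCard p, ∏ l ∈ s, k l := by
    intro t p
    refine Finset.sum_congr rfl fun s hs => Finset.prod_congr rfl fun l hl => ?_
    have hl' : l ≠ i := Finset.ne_of_mem_erase ((Finset.mem_powersetCard.1 hs).1 hl)
    simp [hl']
  unfold lineDeriv
  simp only [esymm_succ n j _ i, hc]
  simp

/-- For every n ≥ 1 and 1 ≤ m ≤ n, σ_m is strictly increasing in
each variable on Γ_m: for every k ∈ Γ_m and every index i, the partial
derivative ∂σ_m/∂k_i at k is strictly positive. -/
theorem stmt_8 (n m : ℕ) (hn : 1 ≤ n) (hm : 1 ≤ m) (hmn : m ≤ n)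
    (k : Fin n → ℝ) (hk : k ∈ GammaCone n m) (i : Fin n) :
    0 < fderiv ℝ (esymm n m) k (Pi.single i 1) := by
  obtain ⟨j, rfl⟩ : ∃ j, m = j + 1 := ⟨m - 1, by omega⟩
  rw [fderiv_esymm_succ]
  exact sum_powersetCard_erase_pos n (j + 1) k hk i j (by omega)
end
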